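/- arXiv:1612.07607 — 2 statements merged into one kernel-verified Lean document; each statement's English description precedes it below -/
import Mathlib

section
/- Let ρ be a bipartite state on ℂ^{dA}⊗ℂ^{dB} with an orthonormal basis {α_a}_{a=1}^{dA} of ℂ^{dA}, linearly independent unit vectors β_1,…,β_{dA} in ℂ^{dB}, and p_a > 0 such that Tr_A[ρ(|α_a⟩⟨α_a|⊗I_B)] = p_a|β_a⟩⟨β_a| for every a. If ⟨α_i⊗β_i, ρ(α_j⊗β_j)⟩ = 0 for all i ≠ j, then ρ = Σ_{a=1}^{dA} p_a |α_a⊗β_a⟩⟨α_a⊗β_a|; in particular ρ is separable. -/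
/-!
The product vectors `e a = α a ⊗ β a` are orthonormal, and `⟨e a, ρ (e a)⟩ = p a`, since this
expectation is `⟨β a, condState ρ (α a) (β a)⟩`. As `α` is an orthonormal basis, the conditional
states carry the whole trace of `ρ`, so `∑ a, p a = Tr ρ`. Hence `ρ` and its compression to the
span of the `e a` have the same trace, and positivity forces `ρ` to be supported on that span.
There the matrix of `ρ` in the basis `e` is diagonal with entries `p a`.
-/

open scoped BigOperators Kronecker Classical ComplexOrder

namespace EPR

noncomputable section

/-- Complex inner product `⟨u, v⟩ = ∑ conj (u a) * v a` (conjugate-linear in the first slot). -/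
def cinner {ι : Type*} [Fintype ι] (u v : ι → ℂ) : ℂ :=
  ∑ a, (starRingEnd ℂ) (u a) * v a

/-- `u` is a unit vector. -/
def IsUnitVec {ι : Type*} [Fintype ι] (u : ι → ℂ) : Prop := cinner u u = 1

/-- Rank-one projection `|u⟩⟨u|`, with entries `u k * conj (u l)`. -/
def proj {ι : Type*} [Fintype ι] (u : ι → ℂ) : Matrix ι ι ℂ :=
  Matrix.of fun k l => u k * (starRingEnd ℂ) (u l)

/-- Rank-one operator `|u⟩⟨v|`, with entries `u k * conj (v l)`. -/
def outer {ι : Type*} [Fintype ι] (u v : ι → ℂ) : Matrix ι ι ℂ :=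
  Matrix.of fun k l => u k * (starRingEnd ℂ) (v l)

/-- A state: positive semidefinite matrix of trace 1. -/
def IsState {ι : Type*} [Fintype ι] (ρ : Matrix ι ι ℂ) : Prop :=
  ρ.PosSemidef ∧ ρ.trace = 1

/-- An effect: `0 ≤ E ≤ I` in the Loewner order. -/
def IsEffect {d : ℕ} (E : Matrix (Fin d) (Fin d) ℂ) : Prop :=
  E.PosSemidef ∧ (1 - E).PosSemidef

/-- Conditional state `Tr_A[ρ (E ⊗ I_B)]` of a bipartite state for an effect `E` on A:
entries `(E')_{b b'} = ∑_{a,a'} E_{a' a} ρ_{(a,b),(a',b')}`. -/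
def condStateE {dA dB : ℕ} (ρ : Matrix (Fin dA × Fin dB) (Fin dA × Fin dB) ℂ)
    (E : Matrix (Fin dA) (Fin dA) ℂ) : Matrix (Fin dB) (Fin dB) ℂ :=
  Matrix.of fun b b' => ∑ a, ∑ a', E a' a * ρ (a, b) (a', b')

/-- Conditional state `Tr_A[ρ (|α⟩⟨α| ⊗ I_B)]` for a non-degenerate projective effect:
entries `∑_{a,a'} conj (α a) * α a' * ρ_{(a,b),(a',b')}`. -/
def condState {dA dB : ℕ} (ρ : Matrix (Fin dA × Fin dB) (Fin dA × Fin dB) ℂ)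
    (α : Fin dA → ℂ) : Matrix (Fin dB) (Fin dB) ℂ :=
  Matrix.of fun b b' => ∑ a, ∑ a', (starRingEnd ℂ) (α a) * α a' * ρ (a, b) (a', b')

/-- Tensor product vector `α ⊗ β` in `ℂ^{dA} ⊗ ℂ^{dB}`. -/
def tensor2 {dA dB : ℕ} (α : Fin dA → ℂ) (β : Fin dB → ℂ) : Fin dA × Fin dB → ℂ :=
  fun p => α p.1 * β p.2

/-- Tensor product vector `α ⊗ β ⊗ γ` in `ℂ^{dA} ⊗ ℂ^{dB} ⊗ ℂ^{dC}`. -/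
def tensor3 {dA dB dC : ℕ} (α : Fin dA → ℂ) (β : Fin dB → ℂ) (γ : Fin dC → ℂ) :
    Fin dA × Fin dB × Fin dC → ℂ :=
  fun p => α p.1 * β p.2.1 * γ p.2.2

/-- Reduced state of a tripartite pure state on AB:
`(ρ_Ψ)_{(a,b),(a',b')} = ∑_c Ψ_{a,b,c} conj (Ψ_{a',b',c})`. -/
def reducedAB {dA dB dC : ℕ} (Ψ : Fin dA × Fin dB × Fin dC → ℂ) :
    Matrix (Fin dA × Fin dB) (Fin dA × Fin dB) ℂ :=
  Matrix.of fun p q => ∑ c, Ψ (p.1, p.2, c) * (starRingEnd ℂ) (Ψ (q.1, q.2, c))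

/-- Partial contraction `⟨α|Ψ⟩ ∈ ℂ^{dB} ⊗ ℂ^{dC}`, with components
`∑_a conj (α a) Ψ_{a,b,c}`. -/
def aContract {dA dB dC : ℕ} (α : Fin dA → ℂ) (Ψ : Fin dA × Fin dB × Fin dC → ℂ) :
    Fin dB × Fin dC → ℂ :=
  fun p => ∑ a, (starRingEnd ℂ) (α a) * Ψ (a, p.1, p.2)

/-- A family of vectors is orthonormal. For `n = d` this is an orthonormal basis of `ℂ^d`. -/
def OrthonormalFam {d n : ℕ} (α : Fin n → Fin d → ℂ) : Prop :=
  ∀ i j, cinner (α i) (α j) = if i = j then 1 else 0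

/-- `ρ` is unsteerable from Alice's side for non-degenerate projective measurements:
there is a finite local-hidden-state ensemble reproducing all conditional states of
every non-degenerate projective measurement (orthonormal basis) on A. -/
def Unsteerable {dA dB : ℕ} (ρ : Matrix (Fin dA × Fin dB) (Fin dA × Fin dB) ℂ) : Prop :=
  ∃ (n : ℕ) (P : Fin n → ℝ) (σ : Fin n → Matrix (Fin dB) (Fin dB) ℂ),
    (∀ ξ, 0 ≤ P ξ) ∧ (∑ ξ, P ξ = 1) ∧ (∀ ξ, IsState (σ ξ)) ∧
    ∀ α : Fin dA → Fin dA → ℂ, OrthonormalFam α →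
      ∃ Q : Fin dA → Fin n → ℝ,
        (∀ a ξ, 0 ≤ Q a ξ ∧ Q a ξ ≤ 1) ∧ (∀ ξ, ∑ a, Q a ξ = 1) ∧
        ∀ a, condState ρ (α a) = ∑ ξ, ((Q a ξ * P ξ : ℝ) : ℂ) • σ ξ

/-- `ρ` is separable: a finite convex-type combination of product states. -/
def Separable {dA dB : ℕ} (ρ : Matrix (Fin dA × Fin dB) (Fin dA × Fin dB) ℂ) : Prop :=
  ∃ (n : ℕ) (q : Fin n → ℝ) (ρA : Fin n → Matrix (Fin dA) (Fin dA) ℂ)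
    (ρB : Fin n → Matrix (Fin dB) (Fin dB) ℂ),
    (∀ k, 0 ≤ q k) ∧ (∀ k, IsState (ρA k)) ∧ (∀ k, IsState (ρB k)) ∧
    ρ = ∑ k, ((q k : ℂ)) • (ρA k ⊗ₖ ρB k)

/-- A local hidden state model for an assemblage `As`, with outcomes `A`, measurement
labels `X`, hidden states `σ` with weights `P`, and response probabilities `R`. -/
def LHSModel {dB : ℕ} {A X : Type*} [Fintype A] {n : ℕ}
    (As : A → X → Matrix (Fin dB) (Fin dB) ℂ)
    (P : Fin n → ℝ) (σ : Fin n → Matrix (Fin dB) (Fin dB) ℂ)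
    (R : A → X → Fin n → ℝ) : Prop :=
  (∀ ξ, 0 ≤ P ξ) ∧ (∑ ξ, P ξ = 1) ∧ (∀ ξ, IsState (σ ξ)) ∧
  (∀ a x ξ, 0 ≤ R a x ξ ∧ R a x ξ ≤ 1) ∧ (∀ x ξ, ∑ a, R a x ξ = 1) ∧
  (∀ a x, As a x = ∑ ξ, ((R a x ξ * P ξ : ℝ) : ℂ) • σ ξ)

/-- Standard basis vector of `ℂ^d`. -/
def stdb {d : ℕ} (a : Fin d) : Fin d → ℂ := fun i => if i = a then 1 else 0

open scoped Matrix

section PosSemidef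

variable {𝕜 m n : Type*} [RCLike 𝕜] [Fintype m] [Fintype n] {A : Matrix m m 𝕜}

lemma mul_eq_zero_of_trace_conjTranspose_mul_mul_eq_zero (hA : A.PosSemidef) {B : Matrix m n 𝕜}
    (htr : (Bᴴ * A * B).trace = 0) : A * B = 0 := by
  have hzero : Bᴴ * A * B = 0 := (hA.conjTranspose_mul_mul_same B).trace_eq_zero_iff.mp htr
  ext i j
  have hquad : star (B.col j) ⬝ᵥ A *ᵥ B.col j = 0 := by
    rw [Matrix.mul_assoc] at hzero
    exact congrFun₂ hzero j j
  exact congrFun ((hA.dotProduct_mulVec_zero_iff _).mp hquad) i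

lemma trace_compl_compression [DecidableEq m] [DecidableEq n] (A : Matrix m m 𝕜)
    {V : Matrix m n 𝕜} (hV : Vᴴ * V = 1) :
    ((1 - V * Vᴴ)ᴴ * A * (1 - V * Vᴴ)).trace = A.trace - (Vᴴ * A * V).trace := by
  have hidem : (1 - V * Vᴴ) * (1 - V * Vᴴ)ᴴ = 1 - V * Vᴴ := by
    have hproj : V * Vᴴ * (V * Vᴴ) = V * Vᴴ := by
      rw [Matrix.mul_assoc, ← Matrix.mul_assoc Vᴴ, hV, Matrix.one_mul]
    simp [Matrix.mul_sub, Matrix.sub_mul, hproj]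
  rw [Matrix.trace_mul_cycle, hidem, Matrix.sub_mul, Matrix.one_mul, Matrix.trace_sub,
    Matrix.mul_assoc V, Matrix.trace_mul_comm V]

lemma eq_compression_of_trace_eq [DecidableEq n] (hA : A.PosSemidef) {V : Matrix m n 𝕜}
    (hV : Vᴴ * V = 1) (htr : (Vᴴ * A * V).trace = A.trace) :
    A = V * (Vᴴ * A * V) * Vᴴ := by
  have hcompl : A * (1 - V * Vᴴ) = 0 :=
    mul_eq_zero_of_trace_conjTranspose_mul_mul_eq_zero hA <| by
      rw [trace_compl_compression A hV, htr, sub_self]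
  have hright : A * (V * Vᴴ) = A := by
    rwa [Matrix.mul_sub, Matrix.mul_one, sub_eq_zero, eq_comm] at hcompl
  have hleft : V * Vᴴ * A = A := by
    simpa [hA.isHermitian.eq] using congrArg Matrix.conjTranspose hright
  calc A = V * Vᴴ * (A * (V * Vᴴ)) := by rw [hright, hleft]
    _ = V * (Vᴴ * A * V) * Vᴴ := by simp only [Matrix.mul_assoc]

end PosSemidef

section RankOne

variable {ι n : Type*} [Fintype ι] [Fintype n]

lemma cinner_eq_dotProduct (u v : ι → ℂ) : cinner u v = star u ⬝ᵥ v := rfl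

lemma proj_eq_vecMulVec (u : ι → ℂ) : proj u = Matrix.vecMulVec u (star u) := rfl

lemma isState_proj {u : ι → ℂ} (hu : IsUnitVec u) : IsState (proj u) := by
  refine ⟨Matrix.posSemidef_vecMulVec_self_star u, ?_⟩
  rw [proj_eq_vecMulVec, Matrix.trace_vecMulVec, dotProduct_comm]
  exact hu

lemma cinner_smul_proj_mulVec_self {u : ι → ℂ} (hu : IsUnitVec u) (c : ℂ) :
    cinner u ((c • proj u) *ᵥ u) = c := by
  rw [IsUnitVec, cinner_eq_dotProduct] at hu
  simp [cinner_eq_dotProduct, proj_eq_vecMulVec, Matrix.smul_mulVec, Matrix.vecMulVec_mulVec, hu]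

lemma eq_sum_smul_proj_of_sum_eq_trace [DecidableEq n] {A : Matrix ι ι ℂ} (hA : A.PosSemidef)
    {e : n → ι → ℂ} (he : ∀ i j, cinner (e i) (e j) = if i = j then 1 else 0) {d : n → ℂ}
    (hd : ∀ i j, cinner (e i) (A *ᵥ e j) = if i = j then d i else 0)
    (htr : ∑ i, d i = A.trace) : A = ∑ i, d i • proj (e i) := by
  let V : Matrix ι n ℂ := (Matrix.of e)ᵀ
  have hV : Vᴴ * V = 1 := by
    ext i j
    exact (he i j).trans Matrix.one_apply.symm
  have hdiag : Vᴴ * A * V = Matrix.diagonal d := by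
    ext i j
    rw [Matrix.mul_assoc]
    exact (hd i j).trans (Matrix.diagonal_apply ..).symm
  have hsupp := eq_compression_of_trace_eq hA hV <| by rw [hdiag, Matrix.trace_diagonal, htr]
  rw [hsupp, hdiag]
  ext x y
  rw [Matrix.mul_apply, Matrix.sum_apply]
  refine Finset.sum_congr rfl fun i _ => ?_
  simp [V, proj, Matrix.mul_diagonal, mul_comm (d i), mul_right_comm]

end RankOne

section Bipartite

variable {n dA dB : ℕ}

lemma cinner_tensor2 (α α' : Fin dA → ℂ) (β β' : Fin dB → ℂ) :
    cinner (tensor2 α β) (tensor2 α' β') = cinner α α' * cinner β β' := by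
  simp only [cinner, tensor2, Fintype.sum_prod_type, Finset.sum_mul_sum, map_mul,
    mul_mul_mul_comm]

lemma proj_tensor2 (α : Fin dA → ℂ) (β : Fin dB → ℂ) :
    proj (tensor2 α β) = proj α ⊗ₖ proj β := by
  ext x y
  simp [proj, tensor2, mul_mul_mul_comm]

lemma OrthonormalFam.isUnitVec {α : Fin n → Fin dA → ℂ} (hα : OrthonormalFam α) (i : Fin n) :
    IsUnitVec (α i) :=
  (hα i i).trans (if_pos rfl)

lemma OrthonormalFam.cinner_tensor2_eq_ite {α : Fin n → Fin dA → ℂ} (hα : OrthonormalFam α)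
    {β : Fin n → Fin dB → ℂ} (hβ : ∀ i, IsUnitVec (β i)) (i j : Fin n) :
    cinner (tensor2 (α i) (β i)) (tensor2 (α j) (β j)) = if i = j then 1 else 0 := by
  rw [cinner_tensor2, hα i j, ite_mul, one_mul, zero_mul]
  refine if_ctx_congr Iff.rfl (fun hij => ?_) fun _ => rfl
  rw [← hij]
  exact hβ i

lemma OrthonormalFam.sum_proj {α : Fin dA → Fin dA → ℂ} (hα : OrthonormalFam α) :
    ∑ i, proj (α i) = 1 := by
  let U : Matrix (Fin dA) (Fin dA) ℂ := (Matrix.of α)ᵀ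
  have hUU : Uᴴ * U = 1 := by
    ext i j
    exact (hα i j).trans Matrix.one_apply.symm
  rw [← mul_eq_one_comm.mp hUU]
  ext a a'
  simp [U, proj, Matrix.sum_apply, Matrix.mul_apply]

lemma cinner_tensor2_mulVec_tensor2 (ρ : Matrix (Fin dA × Fin dB) (Fin dA × Fin dB) ℂ)
    (α : Fin dA → ℂ) (β : Fin dB → ℂ) :
    cinner (tensor2 α β) (ρ *ᵥ tensor2 α β) = cinner β (condState ρ α *ᵥ β) := by
  simp only [cinner, tensor2, condState, Matrix.mulVec, dotProduct, Matrix.of_apply,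
    Fintype.sum_prod_type, Finset.mul_sum, Finset.sum_mul, map_mul]
  rw [Finset.sum_comm]
  refine Finset.sum_congr rfl fun b _ => ?_
  rw [Finset.sum_comm_cycle]
  refine Finset.sum_congr rfl fun b' _ => Finset.sum_congr rfl fun a _ =>
    Finset.sum_congr rfl fun a' _ => ?_
  ring

lemma trace_condState (ρ : Matrix (Fin dA × Fin dB) (Fin dA × Fin dB) ℂ) (α : Fin dA → ℂ) :
    (condState ρ α).trace = (ρ * (proj α ⊗ₖ 1)).trace := by
  simp only [Matrix.trace, Matrix.diag_apply, condState, Matrix.of_apply, Matrix.mul_apply,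
    Matrix.kroneckerMap_apply, proj, Matrix.one_apply, Fintype.sum_prod_type, mul_ite, mul_one,
    mul_zero, Finset.sum_ite_eq', Finset.mem_univ, if_true]
  rw [Finset.sum_comm]
  refine Finset.sum_congr rfl fun a _ => Finset.sum_congr rfl fun b _ =>
    Finset.sum_congr rfl fun a' _ => ?_
  ring

lemma OrthonormalFam.sum_trace_condState {α : Fin dA → Fin dA → ℂ} (hα : OrthonormalFam α)
    (ρ : Matrix (Fin dA × Fin dB) (Fin dA × Fin dB) ℂ) :
    ∑ i, (condState ρ (α i)).trace = ρ.trace := by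
  have hsum : ∑ i, proj (α i) ⊗ₖ (1 : Matrix (Fin dB) (Fin dB) ℂ) = 1 := by
    rw [← Matrix.one_kronecker_one, ← hα.sum_proj]
    ext x y
    simp [Matrix.sum_apply, Finset.sum_mul]
  simp only [trace_condState]
  rw [← Matrix.trace_sum, ← Matrix.mul_sum, hsum, Matrix.mul_one]

lemma separable_sum_smul_proj_tensor2 {q : Fin n → ℝ} (hq : ∀ k, 0 ≤ q k)
    {α : Fin n → Fin dA → ℂ} (hα : ∀ k, IsUnitVec (α k))
    {β : Fin n → Fin dB → ℂ} (hβ : ∀ k, IsUnitVec (β k)) :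
    Separable (∑ k, (q k : ℂ) • proj (tensor2 (α k) (β k))) :=
  ⟨n, q, fun k => proj (α k), fun k => proj (β k), hq, fun k => isState_proj (hα k),
    fun k => isState_proj (hβ k), by simp only [proj_tensor2]⟩

theorem stmt16_general {ρ : Matrix (Fin dA × Fin dB) (Fin dA × Fin dB) ℂ} (hρ : ρ.PosSemidef)
    {α : Fin dA → Fin dA → ℂ} (hα : OrthonormalFam α)
    {β : Fin dA → Fin dB → ℂ} (hβ : ∀ a, IsUnitVec (β a)) {p : Fin dA → ℝ}
    (h : ∀ a, condState ρ (α a) = (p a : ℂ) • proj (β a))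
    (hdiag : ∀ i j, i ≠ j → cinner (tensor2 (α i) (β i)) (ρ *ᵥ tensor2 (α j) (β j)) = 0) :
    ρ = ∑ a, (p a : ℂ) • proj (tensor2 (α a) (β a)) ∧ Separable ρ := by
  have hexp (a : Fin dA) : cinner (tensor2 (α a) (β a)) (ρ *ᵥ tensor2 (α a) (β a)) = p a := by
    rw [cinner_tensor2_mulVec_tensor2, h, cinner_smul_proj_mulVec_self (hβ a)]
  have helem (i j : Fin dA) : cinner (tensor2 (α i) (β i)) (ρ *ᵥ tensor2 (α j) (β j)) =
      if i = j then (p i : ℂ) else 0 := by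
    split_ifs with hij
    · rw [← hij, hexp]
    · exact hdiag i j hij
  have htr : ∑ a, (p a : ℂ) = ρ.trace := by
    simp only [← hα.sum_trace_condState ρ, h, Matrix.trace_smul, (isState_proj (hβ _)).2,
      smul_eq_mul, mul_one]
  have hp (a : Fin dA) : 0 ≤ p a := by
    rw [← Complex.zero_le_real, ← hexp]
    exact hρ.dotProduct_mulVec_nonneg _
  have hsum := eq_sum_smul_proj_of_sum_eq_trace hρ (hα.cinner_tensor2_eq_ite hβ) helem htr
  exact ⟨hsum, hsum ▸ separable_sum_smul_proj_tensor2 hp hα.isUnitVec hβ⟩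

end Bipartite

/-- corollary, part (ii): under the hypotheses of Theorem 2 of the
paper, if all off-diagonal matrix elements `⟨α_i⊗β_i, ρ (α_j⊗β_j)⟩` with `i ≠ j`
vanish, then `ρ = ∑_a p_a |α_a⊗β_a⟩⟨α_a⊗β_a|` and is separable. -/
theorem stmt16 {dA dB : ℕ} (ρ : Matrix (Fin dA × Fin dB) (Fin dA × Fin dB) ℂ)
    (hρ : IsState ρ)
    (α : Fin dA → Fin dA → ℂ) (hα : OrthonormalFam α)
    (β : Fin dA → Fin dB → ℂ) (hβ : ∀ a, IsUnitVec (β a))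
    (hind : LinearIndependent ℂ β)
    (p : Fin dA → ℝ) (hp : ∀ a, 0 < p a)
    (h : ∀ a, condState ρ (α a) = (p a : ℂ) • proj (β a))
    (hdiag : ∀ i j, i ≠ j →
      cinner (tensor2 (α i) (β i)) (ρ.mulVec (tensor2 (α j) (β j))) = 0) :
    ρ = (∑ a, ((p a : ℂ)) • proj (tensor2 (α a) (β a))) ∧ Separable ρ :=
  stmt16_general hρ.1 hα hβ h hdiag

end

end EPR
end

section
/- Let Ψ be a unit vector in ℂ^{dA}⊗ℂ^{dB} (with dA, dB ≥ 2) that is not a product vector, i.e. Ψ ≠ α⊗β for all α ∈ ℂ^{dA}, β ∈ ℂ^{dB}. Then the pure bipartite state ρ = |Ψ⟩⟨Ψ| is steerable from Alice's side for non-degenerate projective measurements: it admits no local hidden state model. -/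
/-!
A finite ensemble of hidden states spans a convex cone with finitely many extreme rays, while an
entangled pure state produces conditional states on infinitely many extreme rays of the cone of
positive semidefinite matrices.

In more detail, the conditional state of `|Ψ⟩⟨Ψ|` for `α` is `|v⟩⟨v|` with `v = ⟨α|Ψ⟩`. If
`|v⟩⟨v| = A + B` with `A` and `B` positive semidefinite, then `A` annihilates the orthogonal
complement of `v`, so it is a multiple of `|v⟩⟨v|`; hence `|v⟩⟨v|` lies in the cone spanned by the
hidden states only if it is a multiple of one of them. Since `Ψ` is not a product vector, its
coefficient matrix has two linearly independent rows `x` and `y`, and the vectors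
`e_{a₁} + t e_{a₂}`, `t : ℕ`, contract `Ψ` to the pairwise non-parallel vectors `x + t y`. By the
pigeonhole principle two of them would belong to the same hidden state.
-/

open scoped BigOperators Kronecker Classical ComplexOrder

namespace EPR

noncomputable section

open Matrix
open scoped NNReal

lemma linearIndependent_pair_add_smul {K V : Type*} [Field K] [AddCommGroup V] [Module K V]
    {x y : V} (h : LinearIndependent K ![x, y]) {s t : K} (hst : s ≠ t) :
    LinearIndependent K ![x + s • y, x + t • y] := by
  have hdet : (1 : K) * t ≠ s * 1 := by simpa using hst.symm
  simpa only [one_smul] using (LinearIndependent.pair_add_smul_add_smul_iff 1 s 1 t).mpr ⟨h, hdet⟩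

lemma mulVec_eq_zero_of_add_mulVec_eq_zero {𝕜 ι : Type*} [RCLike 𝕜] [Fintype ι]
    {A B : Matrix ι ι 𝕜} (hA : A.PosSemidef) (hB : B.PosSemidef) {w : ι → 𝕜}
    (h : (A + B) *ᵥ w = 0) : A *ᵥ w = 0 := by
  have hsum : star w ⬝ᵥ A *ᵥ w + star w ⬝ᵥ B *ᵥ w = 0 := by
    rw [← dotProduct_add, ← add_mulVec, h, dotProduct_zero]
  rw [← hA.dotProduct_mulVec_zero_iff]
  exact ((add_eq_zero_iff_of_nonneg (hA.dotProduct_mulVec_nonneg w)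
    (hB.dotProduct_mulVec_nonneg w)).mp hsum).1

section PureStates

variable {ι : Type*} [Fintype ι]

lemma proj_ne_zero {v : ι → ℂ} (hv : v ≠ 0) : proj v ≠ 0 := by
  obtain ⟨i, hi⟩ := Function.ne_iff.mp hv
  intro h
  exact hi (by simpa [proj] using congrFun₂ h i i)

lemma proj_mulVec (v w : ι → ℂ) : proj v *ᵥ w = (star v ⬝ᵥ w) • v := by
  change vecMulVec v (star v) *ᵥ w = _
  rw [vecMulVec_mulVec, op_smul_eq_smul]

lemma exists_smul_eq_of_proj_eq_smul_proj {u v : ι → ℂ} {z : ℂ} (hu : u ≠ 0)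
    (h : proj u = z • proj v) : ∃ k : ℂ, k • v = u := by
  obtain ⟨i, hi⟩ := Function.ne_iff.mp hu
  have hi' : star (u i) ≠ 0 := star_ne_zero.mpr hi
  refine ⟨z * star (v i) / star (u i), funext fun b => ?_⟩
  have hentry : u b * star (u i) = z * (v b * star (v i)) := congrFun₂ h b i
  simp only [Pi.smul_apply, smul_eq_mul]
  field_simp
  linear_combination -hentry

lemma exists_eq_smul_proj_of_mulVec_eq_zero {A : Matrix ι ι ℂ} (hA : A.IsHermitian)
    {v : ι → ℂ} (hv : v ≠ 0) (hker : ∀ w, star v ⬝ᵥ w = 0 → A *ᵥ w = 0) :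
    ∃ r : ℂ, A = r • proj v := by
  obtain ⟨j, hj⟩ : ∃ j, v j ≠ 0 := Function.ne_iff.mp hv
  have hj' : star (v j) ≠ 0 := star_ne_zero.mpr hj
  have hrow : ∀ b i, A b i * star (v j) = A b j * star (v i) := by
    intro b i
    have hw := hker (star (v j) • Pi.single i 1 - star (v i) • Pi.single j 1)
      (by simp [dotProduct_sub, mul_comm])
    simpa [mulVec_sub, mulVec_smul, sub_eq_zero, mul_comm] using congrFun hw b
  have hcol : ∀ b, A b j * v j = A j j * v b := by
    intro b
    simpa [hA.apply] using congrArg star (hrow j b)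
  refine ⟨A j j / (v j * star (v j)), Matrix.ext fun b i => ?_⟩
  change A b i = A j j / (v j * star (v j)) * (v b * star (v i))
  field_simp
  linear_combination v j * hrow b i + star (v i) * hcol b

lemma exists_eq_smul_proj_of_add_eq_proj {A B : Matrix ι ι ℂ} (hA : A.PosSemidef)
    (hB : B.PosSemidef) {v : ι → ℂ} (hv : v ≠ 0) (h : A + B = proj v) :
    ∃ r : ℂ, A = r • proj v := by
  refine exists_eq_smul_proj_of_mulVec_eq_zero hA.isHermitian hv fun w hw => ?_
  refine mulVec_eq_zero_of_add_mulVec_eq_zero hA hB ?_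
  rw [h, proj_mulVec, hw, zero_smul]

lemma exists_proj_eq_smul_of_mem_span {S : Set (Matrix ι ι ℂ)}
    (hS : ∀ σ ∈ S, σ.PosSemidef) {v : ι → ℂ} (hv : v ≠ 0)
    (h : proj v ∈ Submodule.span ℝ≥0 S) : ∃ σ ∈ S, ∃ k : ℂ, proj v = k • σ := by
  obtain ⟨n, c, σ, hsum⟩ := Submodule.mem_span_set'.mp h
  have hterm : ∀ i, (c i • (σ i : Matrix ι ι ℂ)).PosSemidef := fun i =>
    (hS _ (σ i).2).smul (zero_le (a := c i))
  obtain ⟨i, -, hi⟩ : ∃ i ∈ Finset.univ, c i • (σ i : Matrix ι ι ℂ) ≠ 0 :=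
    Finset.exists_ne_zero_of_sum_ne_zero (hsum ▸ proj_ne_zero hv)
  obtain ⟨r, hr⟩ := exists_eq_smul_proj_of_add_eq_proj (hterm i)
    (posSemidef_sum (Finset.univ.erase i) fun j _ => hterm j) hv
    ((Finset.add_sum_erase _ _ (Finset.mem_univ i)).trans hsum)
  have hr0 : r ≠ 0 := by
    rintro rfl
    exact hi (hr.trans (zero_smul _ _))
  refine ⟨σ i, (σ i).2, r⁻¹ * (c i : ℂ), ?_⟩
  rw [mul_smul, eq_inv_smul_iff₀ hr0, ← hr]
  rfl

lemma exists_proj_add_smul_notMem_span {S : Set (Matrix ι ι ℂ)} (hfin : S.Finite)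
    (hS : ∀ σ ∈ S, σ.PosSemidef) {x y : ι → ℂ} (hxy : LinearIndependent ℂ ![x, y]) :
    ∃ t : ℕ, proj (x + (t : ℂ) • y) ∉ Submodule.span ℝ≥0 S := by
  by_contra! hmem
  have hne : ∀ t : ℕ, x + (t : ℂ) • y ≠ 0 := fun t =>
    ((LinearIndependent.pair_add_smul_left_iff (t : ℂ)).mpr hxy).ne_zero 0
  choose σ hσ k hk using fun t => exists_proj_eq_smul_of_mem_span hS (hne t) (hmem t)
  obtain ⟨s, -, t, -, hst, hσst⟩ :=
    Set.infinite_univ.exists_ne_map_eq_of_mapsTo (fun t _ => hσ t) hfin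
  have hks : k s ≠ 0 := by
    intro h0
    exact proj_ne_zero (hne s) (by rw [hk s, h0, zero_smul])
  have hproj : proj (x + (t : ℂ) • y) = (k t * (k s)⁻¹) • proj (x + (s : ℂ) • y) := by
    rw [hk s, hσst, hk t, mul_smul, inv_smul_smul₀ hks]
  obtain ⟨z, hz⟩ := exists_smul_eq_of_proj_eq_smul_proj (hne t) hproj
  exact (LinearIndependent.pair_iff' (hne s)).mp
    (linearIndependent_pair_add_smul hxy (Nat.cast_injective.ne hst)) z hz

end PureStates

section UnitVectors

variable {ι : Type*} [Fintype ι]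

lemma cinner_eq_inner (u v : ι → ℂ) :
    cinner u v = inner ℂ (WithLp.toLp 2 u) (WithLp.toLp 2 v) := by
  simp [cinner, PiLp.inner_apply, mul_comm]

lemma isUnitVec_iff_norm_eq_one (u : ι → ℂ) : IsUnitVec u ↔ ‖WithLp.toLp 2 u‖ = 1 := by
  rw [IsUnitVec, cinner_eq_inner, inner_self_eq_norm_sq_to_K]
  rw [← RCLike.ofReal_pow, ← RCLike.ofReal_one (K := ℂ), RCLike.ofReal_inj]
  exact pow_eq_one_iff_of_nonneg (norm_nonneg (WithLp.toLp 2 u)) two_ne_zero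

lemma exists_isUnitVec_smul_eq {v : ι → ℂ} (hv : v ≠ 0) :
    ∃ (r : ℝ≥0) (u : ι → ℂ), IsUnitVec u ∧ r • u = v := by
  set w : EuclideanSpace ℂ ι := WithLp.toLp 2 v
  have hw : w ≠ 0 := (WithLp.toLp_eq_zero 2).not.mpr hv
  refine ⟨‖w‖₊, ‖w‖₊⁻¹ • v, ?_, smul_inv_smul₀ (nnnorm_ne_zero_iff.mpr hw) v⟩
  rw [isUnitVec_iff_norm_eq_one]
  exact norm_smul_inv_norm (𝕜 := ℝ) hw

lemma exists_orthonormalFam_apply_eq {d : ℕ} (i : Fin d) {u : Fin d → ℂ} (hu : IsUnitVec u) :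
    ∃ α : Fin d → Fin d → ℂ, OrthonormalFam α ∧ α i = u := by
  have hsingle : Orthonormal ℂ
      (({i} : Set (Fin d)).domRestrict fun _ => (WithLp.toLp 2 u : EuclideanSpace ℂ (Fin d))) :=
    ⟨fun _ => (isUnitVec_iff_norm_eq_one u).mp hu,
      fun j k hjk => absurd (Subsingleton.elim j k) hjk⟩
  obtain ⟨e, he⟩ := hsingle.exists_orthonormalBasis_extension_of_card_eq (by simp)
  refine ⟨fun j => e j, fun j k => ?_, by simp only [he i rfl]⟩
  simpa only [cinner_eq_inner] using orthonormal_iff_ite.mp e.orthonormal j k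

end UnitVectors

section ConditionalStates

variable {dA dB : ℕ}

/-- The partial contraction `⟨α|Ψ⟩ ∈ ℂ^{dB}`, the bipartite analogue of `aContract`. It is written
as a vector-matrix product with the coefficient matrix of `Ψ`. -/
def contract (α : Fin dA → ℂ) (Ψ : Fin dA × Fin dB → ℂ) : Fin dB → ℂ :=
  star α ᵥ* Matrix.of (Function.curry Ψ)

lemma contract_single_add_smul_single (Ψ : Fin dA × Fin dB → ℂ) (a₁ a₂ : Fin dA) (t : ℂ) :
    contract (Pi.single a₁ 1 + t • Pi.single a₂ 1) Ψ =
      Function.curry Ψ a₁ + star t • Function.curry Ψ a₂ := by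
  simp only [contract, star_add, star_smul, Pi.star_single, star_one, add_vecMul, smul_vecMul,
    single_one_vecMul]
  rfl

lemma condState_proj (Ψ : Fin dA × Fin dB → ℂ) (α : Fin dA → ℂ) :
    condState (proj Ψ) α = proj (contract α Ψ) := by
  ext b b'
  simp only [condState, proj, contract, vecMul, dotProduct, Pi.star_apply, RCLike.star_def,
    Matrix.of_apply, Function.curry_apply, map_sum, map_mul, Complex.conj_conj,
    Finset.sum_mul_sum]
  refine Finset.sum_congr rfl fun a _ => Finset.sum_congr rfl fun a' _ => ?_
  ring

lemma condState_smul (ρ : Matrix (Fin dA × Fin dB) (Fin dA × Fin dB) ℂ) (r : ℝ≥0)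
    (α : Fin dA → ℂ) : condState ρ (r • α) = r ^ 2 • condState ρ α := by
  ext b b'
  simp only [condState, Matrix.of_apply, Matrix.smul_apply, Pi.smul_apply, NNReal.smul_def,
    Complex.real_smul, map_mul, Complex.conj_ofReal, Finset.mul_sum]
  refine Finset.sum_congr rfl fun a _ => Finset.sum_congr rfl fun a' _ => ?_
  push_cast
  ring

lemma Unsteerable.exists_condState_mem_span
    {ρ : Matrix (Fin dA × Fin dB) (Fin dA × Fin dB) ℂ} (hρ : Unsteerable ρ) :
    ∃ S : Set (Matrix (Fin dB) (Fin dB) ℂ), S.Finite ∧ (∀ σ ∈ S, σ.PosSemidef) ∧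
      ∀ α, condState ρ α ∈ Submodule.span ℝ≥0 S := by
  obtain ⟨n, P, σ, hP, -, hσ, hmodel⟩ := hρ
  refine ⟨Set.range σ, Set.finite_range σ, Set.forall_mem_range.mpr fun ξ => (hσ ξ).1,
    fun α => ?_⟩
  obtain rfl | hα := eq_or_ne α 0
  · have hzero : condState ρ 0 = 0 := by
      ext
      simp [condState]
    exact hzero ▸ Submodule.zero_mem _
  obtain ⟨i, -⟩ : ∃ i, α i ≠ 0 := Function.ne_iff.mp hα
  obtain ⟨r, u, hu, rfl⟩ := exists_isUnitVec_smul_eq hα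
  obtain ⟨e, he, rfl⟩ := exists_orthonormalFam_apply_eq i hu
  obtain ⟨Q, hQ, -, hcond⟩ := hmodel e he
  rw [condState_smul, hcond i]
  refine Submodule.smul_mem _ _ (Submodule.sum_mem _ fun ξ _ => ?_)
  exact Submodule.smul_mem _ (⟨Q i ξ * P ξ, mul_nonneg (hQ i ξ).1 (hP ξ)⟩ : ℝ≥0)
    (Submodule.subset_span (Set.mem_range_self ξ))

lemma exists_linearIndependent_curry {Ψ : Fin dA × Fin dB → ℂ}
    (hprod : ∀ (α : Fin dA → ℂ) (β : Fin dB → ℂ), Ψ ≠ tensor2 α β) :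
    ∃ a₁ a₂, LinearIndependent ℂ ![Function.curry Ψ a₁, Function.curry Ψ a₂] := by
  obtain ⟨a₁, ha₁⟩ : ∃ a, Function.curry Ψ a ≠ 0 := by
    by_contra! hzero
    exact hprod 0 0 (funext fun p => by simpa [tensor2] using congrFun (hzero p.1) p.2)
  refine ⟨a₁, ?_⟩
  simp only [LinearIndependent.pair_iff' ha₁]
  by_contra! hparallel
  choose k hk using hparallel
  exact hprod k (Function.curry Ψ a₁) (funext fun p => (congrFun (hk p.1) p.2).symm)

end ConditionalStates

/-- every pure bipartite state that is not a product state is steerable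
from Alice's side for non-degenerate projective measurements. -/
theorem stmt17 {dA dB : ℕ} (hdA : 2 ≤ dA) (hdB : 2 ≤ dB)
    (Ψ : Fin dA × Fin dB → ℂ) (hΨ : IsUnitVec Ψ)
    (hprod : ∀ (α : Fin dA → ℂ) (β : Fin dB → ℂ), Ψ ≠ tensor2 α β) :
    ¬ Unsteerable (proj Ψ) := by
  intro hunst
  obtain ⟨S, hfin, hS, hcond⟩ := hunst.exists_condState_mem_span
  obtain ⟨a₁, a₂, hrows⟩ := exists_linearIndependent_curry hprod
  obtain ⟨t, ht⟩ := exists_proj_add_smul_notMem_span hfin hS hrows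
  apply ht
  have hmem := hcond (Pi.single a₁ 1 + (t : ℂ) • Pi.single a₂ 1)
  rwa [condState_proj, contract_single_add_smul_single, star_natCast] at hmem

end

end EPR
end
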